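/- arXiv:2301.10037 — 2 statements merged into one kernel-verified Lean document; each statement's English description precedes it below -/
import Mathlib

section
/- Completeness of Hyper Hoare Logic: for all hyper-assertions P, Q and every command C, if the hyper-triple ⊨ {P} C {Q} is valid, then ⊢ {P} C {Q} is derivable in the core proof system. -/
/-- Commands of the programming language. -/
inductive Cmd (PVar PVal : Type) : Type where
  | skip : Cmd PVar PVal
  | assign : PVar → ((PVar → PVal) → PVal) → Cmd PVar PVal
  | havoc : PVar → Cmd PVar PVal
  | assume : ((PVar → PVal) → Prop) → Cmd PVar PVal
  | seq : Cmd PVar PVal → Cmd PVar PVal → Cmd PVar PVal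
  | choice : Cmd PVar PVal → Cmd PVar PVal → Cmd PVar PVal
  | iter : Cmd PVar PVal → Cmd PVar PVal

/-- Big-step semantics ⟨C, σ⟩ → σ'. -/
inductive BigStep {PVar PVal : Type} [DecidableEq PVar] :
    Cmd PVar PVal → (PVar → PVal) → (PVar → PVal) → Prop where
  | skip (σ : PVar → PVal) : BigStep Cmd.skip σ σ
  | assign (x : PVar) (e : (PVar → PVal) → PVal) (σ : PVar → PVal) :
      BigStep (Cmd.assign x e) σ (Function.update σ x (e σ))
  | havoc (x : PVar) (σ : PVar → PVal) (v : PVal) :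
      BigStep (Cmd.havoc x) σ (Function.update σ x v)
  | assume {b : (PVar → PVal) → Prop} {σ : PVar → PVal} (h : b σ) :
      BigStep (Cmd.assume b) σ σ
  | seq {C1 C2 : Cmd PVar PVal} {σ σ' σ'' : PVar → PVal} :
      BigStep C1 σ σ' → BigStep C2 σ' σ'' → BigStep (Cmd.seq C1 C2) σ σ''
  | choiceL {C1 C2 : Cmd PVar PVal} {σ σ' : PVar → PVal} :
      BigStep C1 σ σ' → BigStep (Cmd.choice C1 C2) σ σ'
  | choiceR {C1 C2 : Cmd PVar PVal} {σ σ' : PVar → PVal} :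
      BigStep C2 σ σ' → BigStep (Cmd.choice C1 C2) σ σ'
  | iterNil {C : Cmd PVar PVal} {σ : PVar → PVal} : BigStep (Cmd.iter C) σ σ
  | iterCons {C : Cmd PVar PVal} {σ σ' σ'' : PVar → PVal} :
      BigStep C σ σ' → BigStep (Cmd.iter C) σ' σ'' → BigStep (Cmd.iter C) σ σ''

/-- Extended states: a logical state paired with a program state. -/
abbrev EState (PVar PVal LVar LVal : Type) : Type :=
  (LVar → LVal) × (PVar → PVal)

/-- Extended semantics of a command on a set of extended states. -/
def sem {PVar PVal LVar LVal : Type} [DecidableEq PVar] (C : Cmd PVar PVal)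
    (S : Set (EState PVar PVal LVar LVal)) : Set (EState PVar PVal LVar LVal) :=
  { φ | ∃ σ : PVar → PVal, (φ.1, σ) ∈ S ∧ BigStep C σ φ.2 }

/-- Hyper-assertions: predicates over sets of extended states. -/
abbrev HAssn (PVar PVal LVar LVal : Type) : Type :=
  Set (EState PVar PVal LVar LVal) → Prop

/-- Validity of a hyper-triple ⊨ {P} C {Q}. -/
def HyperTriple {PVar PVal LVar LVal : Type} [DecidableEq PVar]
    (P : HAssn PVar PVal LVar LVal) (C : Cmd PVar PVal)
    (Q : HAssn PVar PVal LVar LVal) : Prop :=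
  ∀ S : Set (EState PVar PVal LVar LVal), P S → Q (sem C S)

/-- The ⊗ operator on hyper-assertions. -/
def otimes {PVar PVal LVar LVal : Type} (Q1 Q2 : HAssn PVar PVal LVar LVal) :
    HAssn PVar PVal LVar LVal :=
  fun S => ∃ S1 S2, S = S1 ∪ S2 ∧ Q1 S1 ∧ Q2 S2

/-- The ⨂_{n ∈ ℕ} operator on indexed families of hyper-assertions. -/
def bigotimes {PVar PVal LVar LVal : Type} (I : ℕ → HAssn PVar PVal LVar LVal) :
    HAssn PVar PVal LVar LVal :=
  fun S => ∃ f : ℕ → Set (EState PVar PVal LVar LVal),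
    S = (⋃ n, f n) ∧ ∀ n, I n (f n)

/-- The core proof system of Hyper Hoare Logic: ⊢ {P} C {Q}. -/
inductive Derivable {PVar PVal LVar LVal : Type} [DecidableEq PVar] :
    HAssn PVar PVal LVar LVal → Cmd PVar PVal → HAssn PVar PVal LVar LVal → Prop where
  | skip (P : HAssn PVar PVal LVar LVal) : Derivable P Cmd.skip P
  | seq {P R Q : HAssn PVar PVal LVar LVal} {C1 C2 : Cmd PVar PVal} :
      Derivable P C1 R → Derivable R C2 Q → Derivable P (Cmd.seq C1 C2) Q
  | choice {P Q1 Q2 : HAssn PVar PVal LVar LVal} {C1 C2 : Cmd PVar PVal} :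
      Derivable P C1 Q1 → Derivable P C2 Q2 →
      Derivable P (Cmd.choice C1 C2) (otimes Q1 Q2)
  | iter {C : Cmd PVar PVal} (I : ℕ → HAssn PVar PVal LVar LVal) :
      (∀ n, Derivable (I n) C (I (n + 1))) →
      Derivable (I 0) (Cmd.iter C) (bigotimes I)
  | cons {P P' Q Q' : HAssn PVar PVal LVar LVal} {C : Cmd PVar PVal} :
      (∀ S, P S → P' S) → (∀ S, Q' S → Q S) → Derivable P' C Q' → Derivable P C Q
  | exist {α : Type} {C : Cmd PVar PVal} (P Q : α → HAssn PVar PVal LVar LVal) :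
      (∀ x : α, Derivable (P x) C (Q x)) →
      Derivable (fun S => ∃ x, P x S) C (fun S => ∃ x, Q x S)
  | assume (P : HAssn PVar PVal LVar LVal) (b : (PVar → PVal) → Prop) :
      Derivable (fun S => P { φ ∈ S | b φ.2 }) (Cmd.assume b) P
  | assign (P : HAssn PVar PVal LVar LVal) (x : PVar) (e : (PVar → PVal) → PVal) :
      Derivable
        (fun S => P { φ | ∃ α ∈ S, φ.1 = α.1 ∧ φ.2 = Function.update α.2 x (e α.2) })
        (Cmd.assign x e) P
  | havoc (P : HAssn PVar PVal LVar LVal) (x : PVar) :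
      Derivable
        (fun S => P { φ | ∃ α ∈ S, ∃ v, φ.1 = α.1 ∧ φ.2 = Function.update α.2 x v })
        (Cmd.havoc x) P

/-!
Every command admits an exact triple: from the precondition `S = S₀` the proof system derives the
postcondition `S = sem C S₀`, by induction on `C`. For iteration the invariant is
`I n := (S = (sem C)^[n] S₀)`, whose indexed tensor product pins the set down to the union of the
iterates. An arbitrary precondition `P` is the existential quantification over the sets `S₀`
satisfying it, so rule Exist glues the exact triples into any valid hyper-triple.
-/

section Semantics

variable {PVar PVal LVar LVal : Type} [DecidableEq PVar]

theorem sem_skip (S : Set (EState PVar PVal LVar LVal)) : sem Cmd.skip S = S := by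
  ext ⟨l, σ'⟩
  constructor
  · rintro ⟨σ, hσ, ⟨⟩⟩
    exact hσ
  · exact fun hσ => ⟨σ', hσ, .skip σ'⟩

theorem sem_assign (x : PVar) (e : (PVar → PVal) → PVal)
    (S : Set (EState PVar PVal LVar LVal)) :
    sem (Cmd.assign x e) S =
      { φ | ∃ α ∈ S, φ.1 = α.1 ∧ φ.2 = Function.update α.2 x (e α.2) } := by
  ext ⟨l, σ'⟩
  constructor
  · rintro ⟨σ, hσ, ⟨⟩⟩
    exact ⟨(l, σ), hσ, rfl, rfl⟩
  · rintro ⟨⟨_, σ⟩, hσ, ⟨⟩, ⟨⟩⟩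
    exact ⟨σ, hσ, .assign x e σ⟩

theorem sem_havoc (x : PVar) (S : Set (EState PVar PVal LVar LVal)) :
    sem (Cmd.havoc x) S =
      { φ | ∃ α ∈ S, ∃ v, φ.1 = α.1 ∧ φ.2 = Function.update α.2 x v } := by
  ext ⟨l, σ'⟩
  constructor
  · rintro ⟨σ, hσ, ⟨⟩⟩
    exact ⟨(l, σ), hσ, _, rfl, rfl⟩
  · rintro ⟨⟨_, σ⟩, hσ, v, ⟨⟩, ⟨⟩⟩
    exact ⟨σ, hσ, .havoc x σ v⟩

theorem sem_assume (b : (PVar → PVal) → Prop) (S : Set (EState PVar PVal LVar LVal)) :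
    sem (Cmd.assume b) S = { φ ∈ S | b φ.2 } := by
  ext ⟨l, σ'⟩
  constructor
  · rintro ⟨σ, hσ, hexec⟩
    cases hexec with
    | assume hb => exact ⟨hσ, hb⟩
  · exact fun ⟨hσ, hb⟩ => ⟨σ', hσ, .assume hb⟩

theorem sem_seq (C₁ C₂ : Cmd PVar PVal) (S : Set (EState PVar PVal LVar LVal)) :
    sem (Cmd.seq C₁ C₂) S = sem C₂ (sem C₁ S) := by
  ext ⟨l, σ''⟩
  constructor
  · rintro ⟨σ, hσ, hexec⟩
    cases hexec with
    | @seq _ _ _ σ' _ h₁ h₂ => exact ⟨σ', ⟨σ, hσ, h₁⟩, h₂⟩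
  · exact fun ⟨_, ⟨σ, hσ, h₁⟩, h₂⟩ => ⟨σ, hσ, .seq h₁ h₂⟩

theorem sem_choice (C₁ C₂ : Cmd PVar PVal) (S : Set (EState PVar PVal LVar LVal)) :
    sem (Cmd.choice C₁ C₂) S = sem C₁ S ∪ sem C₂ S := by
  ext ⟨l, σ'⟩
  constructor
  · rintro ⟨σ, hσ, hexec⟩
    cases hexec with
    | choiceL h₁ => exact .inl ⟨σ, hσ, h₁⟩
    | choiceR h₂ => exact .inr ⟨σ, hσ, h₂⟩
  · rintro (⟨σ, hσ, h₁⟩ | ⟨σ, hσ, h₂⟩)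
    exacts [⟨σ, hσ, .choiceL h₁⟩, ⟨σ, hσ, .choiceR h₂⟩]

theorem bigStep_iter_iff_reflTransGen {C : Cmd PVar PVal} {σ σ' : PVar → PVal} :
    BigStep (Cmd.iter C) σ σ' ↔ Relation.ReflTransGen (BigStep C) σ σ' := by
  constructor
  · intro h
    generalize hD : Cmd.iter C = D at h
    induction h with
    | iterNil => exact .refl
    | iterCons hstep _ _ ih =>
      cases hD
      exact .head hstep (ih rfl)
    | _ => cases hD
  · intro h
    induction h using Relation.ReflTransGen.head_induction_on with
    | refl => exact .iterNil
    | head hstep _ ih => exact .iterCons hstep ih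

theorem subset_sem_iter (C : Cmd PVar PVal) (S : Set (EState PVar PVal LVar LVal)) :
    S ⊆ sem (Cmd.iter C) S :=
  fun φ hφ => ⟨φ.2, hφ, .iterNil⟩

theorem sem_sem_iter_subset (C : Cmd PVar PVal) (S : Set (EState PVar PVal LVar LVal)) :
    sem C (sem (Cmd.iter C) S) ⊆ sem (Cmd.iter C) S :=
  fun _ ⟨_, ⟨σ, hσ, hiter⟩, hstep⟩ =>
    ⟨σ, hσ, bigStep_iter_iff_reflTransGen.2 ((bigStep_iter_iff_reflTransGen.1 hiter).tail hstep)⟩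

theorem exists_mem_iterate_sem_of_reflTransGen {C : Cmd PVar PVal} {l : LVar → LVal}
    {σ σ' : PVar → PVal} {S : Set (EState PVar PVal LVar LVal)} (hσ : (l, σ) ∈ S)
    (h : Relation.ReflTransGen (BigStep C) σ σ') : ∃ n, (l, σ') ∈ (sem C)^[n] S := by
  induction h with
  | refl => exact ⟨0, hσ⟩
  | tail _ hstep ih =>
    obtain ⟨n, hn⟩ := ih
    refine ⟨n + 1, ?_⟩
    rw [Function.iterate_succ_apply']
    exact ⟨_, hn, hstep⟩

theorem sem_mono (C : Cmd PVar PVal) :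
    Monotone (sem C : Set (EState PVar PVal LVar LVal) → Set (EState PVar PVal LVar LVal)) :=
  fun _ _ hST _ ⟨σ, hσ, h⟩ => ⟨σ, hST hσ, h⟩

theorem iterate_sem_subset_sem_iter (C : Cmd PVar PVal) (S : Set (EState PVar PVal LVar LVal))
    (n : ℕ) : (sem C)^[n] S ⊆ sem (Cmd.iter C) S := by
  induction n with
  | zero => exact subset_sem_iter C S
  | succ n ih =>
    rw [Function.iterate_succ_apply']
    exact (sem_mono C ih).trans (sem_sem_iter_subset C S)

theorem sem_iter (C : Cmd PVar PVal) (S : Set (EState PVar PVal LVar LVal)) :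
    sem (Cmd.iter C) S = ⋃ n, (sem C)^[n] S := by
  apply Set.Subset.antisymm
  · rintro ⟨l, σ'⟩ ⟨σ, hσ, hiter⟩
    exact Set.mem_iUnion.2
      (exists_mem_iterate_sem_of_reflTransGen hσ (bigStep_iter_iff_reflTransGen.1 hiter))
  · exact Set.iUnion_subset (iterate_sem_subset_sem_iter C S)

end Semantics

section ExactAssertions

variable {PVar PVal LVar LVal : Type}

theorem otimes_eq_eq (S₁ S₂ : Set (EState PVar PVal LVar LVal)) :
    otimes (· = S₁) (· = S₂) = (· = S₁ ∪ S₂) := by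
  funext S
  simp only [otimes, exists_eq_right_right, exists_eq_right]

theorem bigotimes_eq (f : ℕ → Set (EState PVar PVal LVar LVal)) :
    bigotimes (fun n S => S = f n) = (· = ⋃ n, f n) := by
  funext S
  simp only [bigotimes, ← funext_iff, exists_eq_right]

end ExactAssertions

namespace Derivable

variable {PVar PVal LVar LVal : Type} [DecidableEq PVar]

theorem strengthen_pre {P P' Q : HAssn PVar PVal LVar LVal} {C : Cmd PVar PVal}
    (h : Derivable P' C Q) (hP : ∀ S, P S → P' S) : Derivable P C Q :=
  .cons hP (fun _ => id) h

theorem eq_sem (C : Cmd PVar PVal) (S₀ : Set (EState PVar PVal LVar LVal)) :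
    Derivable (· = S₀) C (· = sem C S₀) := by
  induction C generalizing S₀ with
  | skip =>
    rw [sem_skip]
    exact .skip _
  | assign x e => exact (assign _ x e).strengthen_pre fun _ hS => hS ▸ (sem_assign x e S₀).symm
  | havoc x => exact (havoc _ x).strengthen_pre fun _ hS => hS ▸ (sem_havoc x S₀).symm
  | assume b => exact (assume _ b).strengthen_pre fun _ hS => hS ▸ (sem_assume b S₀).symm
  | seq C₁ C₂ ih₁ ih₂ =>
    rw [sem_seq]
    exact .seq (ih₁ S₀) (ih₂ (sem C₁ S₀))
  | choice C₁ C₂ ih₁ ih₂ =>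
    rw [sem_choice, ← otimes_eq_eq]
    exact .choice (ih₁ S₀) (ih₂ S₀)
  | iter C ih =>
    rw [sem_iter, ← bigotimes_eq]
    refine .iter (fun n S => S = (sem C)^[n] S₀) fun n => ?_
    rw [Function.iterate_succ_apply']
    exact ih ((sem C)^[n] S₀)

theorem of_forall_eq {P Q : HAssn PVar PVal LVar LVal} {C : Cmd PVar PVal}
    (h : ∀ S₀, P S₀ → Derivable (· = S₀) C Q) : Derivable P C Q :=
  .cons (fun S hS => ⟨⟨S, hS⟩, rfl⟩) (fun _ ⟨_, hQ⟩ => hQ)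
    (.exist (α := { S₀ // P S₀ }) (fun S₀ S => S = S₀) (fun _ => Q) fun S₀ => h S₀ S₀.2)

end Derivable

/-- Completeness of Hyper Hoare Logic. -/
theorem hyper_hoare_logic_completeness {PVar PVal LVar LVal : Type} [DecidableEq PVar]
    (P Q : HAssn PVar PVal LVar LVal) (C : Cmd PVar PVal)
    (h : HyperTriple P C Q) : Derivable P C Q := by
  refine .of_forall_eq fun S₀ hS₀ => ?_
  have hQ : ∀ S, S = sem C S₀ → Q S := fun _ hS => hS ▸ h S₀ hS₀
  exact .cons (fun _ => id) hQ (.eq_sem C S₀)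
end

section
/- Soundness of the syntactic havoc rule (HavocS): for every program variable x and every closed syntactic hyper-assertion A, the hyper-triple ⊨ {H^x(A)} (havoc x) {A} is valid, where H^x is defined recursively on syntactic hyper-assertions by H^x(∀⟨φ⟩. A) := ∀⟨φ⟩. ∀v. H^x(A[v / φ^P(x)]) and H^x(∃⟨φ⟩. A) := ∃⟨φ⟩. ∃v. H^x(A[v / φ^P(x)]) with v a fresh value variable (A[v / φ^P(x)] being the substitution of the lookup φ^P(x) by v), and H^x acting homomorphically on all other constructors; each syntactic hyper-assertion is interpreted as the hyper-assertion λS. (S satisfies it). -/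
/-- Syntactic program expressions (constants, program-variable lookups, binary
operations, unary function applications). Program and logical values are drawn
from a single type `Val`. -/
inductive PExp (PVar Val : Type) : Type where
  | const : Val → PExp PVar Val
  | var : PVar → PExp PVar Val
  | binop : (Val → Val → Val) → PExp PVar Val → PExp PVar Val → PExp PVar Val
  | fn : (Val → Val) → PExp PVar Val → PExp PVar Val

/-- Semantic interpretation ⟦e⟧ of a syntactic program expression. -/
def PExp.eval {PVar Val : Type} (σ : PVar → Val) : PExp PVar Val → Val
  | .const v => v
  | .var x => σ x
  | .binop op e1 e2 => op (PExp.eval σ e1) (PExp.eval σ e2)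
  | .fn f e => f (PExp.eval σ e)

/-- Syntactic hyper-expressions: constants, program-variable lookups φ^P(x) and
logical-variable lookups φ^L(x) (state variables are names in ℕ), binary operations
and unary function applications. Bound values are represented as constants. -/
inductive HExp (PVar LVar Val : Type) : Type where
  | const : Val → HExp PVar LVar Val
  | pvar : ℕ → PVar → HExp PVar LVar Val
  | lvar : ℕ → LVar → HExp PVar LVar Val
  | binop : (Val → Val → Val) → HExp PVar LVar Val → HExp PVar LVar Val → HExp PVar LVar Val
  | fn : (Val → Val) → HExp PVar LVar Val → HExp PVar LVar Val

/-- Evaluation of a hyper-expression under an environment for state variables. -/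
def HExp.eval {PVar LVar Val : Type} (env : ℕ → EState PVar Val LVar Val) :
    HExp PVar LVar Val → Val
  | .const v => v
  | .pvar n x => (env n).2 x
  | .lvar n x => (env n).1 x
  | .binop op e1 e2 => op (HExp.eval env e1) (HExp.eval env e2)
  | .fn f e => f (HExp.eval env e)

/-- Syntactic hyper-assertions: Boolean constants, comparisons of hyper-expressions,
conjunction, disjunction, value quantifiers (binding represented by Lean functions)
and state quantifiers (binding state-variable names in ℕ). -/
inductive HAssrt (PVar LVar Val : Type) : Type where
  | bconst : Prop → HAssrt PVar LVar Val
  | comp : (Val → Val → Prop) → HExp PVar LVar Val → HExp PVar LVar Val → HAssrt PVar LVar Val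
  | conj : HAssrt PVar LVar Val → HAssrt PVar LVar Val → HAssrt PVar LVar Val
  | disj : HAssrt PVar LVar Val → HAssrt PVar LVar Val → HAssrt PVar LVar Val
  | forallV : (Val → HAssrt PVar LVar Val) → HAssrt PVar LVar Val
  | existsV : (Val → HAssrt PVar LVar Val) → HAssrt PVar LVar Val
  | forallS : ℕ → HAssrt PVar LVar Val → HAssrt PVar LVar Val
  | existsS : ℕ → HAssrt PVar LVar Val → HAssrt PVar LVar Val

/-- Satisfaction of a syntactic hyper-assertion by a set S of extended states,
relative to an environment for state variables. State quantifiers range over S. -/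
def HAssrt.sat {PVar LVar Val : Type} (S : Set (EState PVar Val LVar Val))
    (env : ℕ → EState PVar Val LVar Val) : HAssrt PVar LVar Val → Prop
  | .bconst b => b
  | .comp r e1 e2 => r (HExp.eval env e1) (HExp.eval env e2)
  | .conj A B => HAssrt.sat S env A ∧ HAssrt.sat S env B
  | .disj A B => HAssrt.sat S env A ∨ HAssrt.sat S env B
  | .forallV body => ∀ v : Val, HAssrt.sat S env (body v)
  | .existsV body => ∃ v : Val, HAssrt.sat S env (body v)
  | .forallS n A => ∀ α ∈ S, HAssrt.sat S (Function.update env n α) A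
  | .existsS n A => ∃ α ∈ S, HAssrt.sat S (Function.update env n α) A

/-- Free state variables of a hyper-expression. -/
def HExp.fsv {PVar LVar Val : Type} : HExp PVar LVar Val → Set ℕ
  | .const _ => ∅
  | .pvar n _ => {n}
  | .lvar n _ => {n}
  | .binop _ e1 e2 => HExp.fsv e1 ∪ HExp.fsv e2
  | .fn _ e => HExp.fsv e

/-- Free state variables of a syntactic hyper-assertion. -/
def HAssrt.fsv {PVar LVar Val : Type} : HAssrt PVar LVar Val → Set ℕ
  | .bconst _ => ∅
  | .comp _ e1 e2 => HExp.fsv e1 ∪ HExp.fsv e2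
  | .conj A B => HAssrt.fsv A ∪ HAssrt.fsv B
  | .disj A B => HAssrt.fsv A ∪ HAssrt.fsv B
  | .forallV body => ⋃ v, HAssrt.fsv (body v)
  | .existsV body => ⋃ v, HAssrt.fsv (body v)
  | .forallS n A => HAssrt.fsv A \ {n}
  | .existsS n A => HAssrt.fsv A \ {n}

/-- A syntactic hyper-assertion is closed iff it has no free state variables. -/
def HAssrt.Closed {PVar LVar Val : Type} (A : HAssrt PVar LVar Val) : Prop :=
  HAssrt.fsv A = ∅

/-- Substitution, in a hyper-expression, of the lookup φ^P(x) of the state variable n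
by the value v (as a constant). -/
def HExp.substPC {PVar LVar Val : Type} [DecidableEq PVar]
    (n : ℕ) (x : PVar) (v : Val) : HExp PVar LVar Val → HExp PVar LVar Val
  | .const c => .const c
  | .pvar m x' => if m = n ∧ x' = x then .const v else .pvar m x'
  | .lvar m y => .lvar m y
  | .binop op e1 e2 => .binop op (HExp.substPC n x v e1) (HExp.substPC n x v e2)
  | .fn f e => .fn f (HExp.substPC n x v e)

/-- Capture-avoiding substitution A[v / φ^P(x)] in a hyper-assertion: lookups of the
state variable n at the program variable x are replaced by the constant v, stopping
at rebinding of the state-variable name n. -/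
def HAssrt.substPC {PVar LVar Val : Type} [DecidableEq PVar]
    (n : ℕ) (x : PVar) (v : Val) : HAssrt PVar LVar Val → HAssrt PVar LVar Val
  | .bconst b => .bconst b
  | .comp r e1 e2 => .comp r (HExp.substPC n x v e1) (HExp.substPC n x v e2)
  | .conj A B => .conj (HAssrt.substPC n x v A) (HAssrt.substPC n x v B)
  | .disj A B => .disj (HAssrt.substPC n x v A) (HAssrt.substPC n x v B)
  | .forallV body => .forallV (fun w => HAssrt.substPC n x v (body w))
  | .existsV body => .existsV (fun w => HAssrt.substPC n x v (body w))
  | .forallS m A => if m = n then .forallS m A else .forallS m (HAssrt.substPC n x v A)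
  | .existsS m A => if m = n then .existsS m A else .existsS m (HAssrt.substPC n x v A)

/-- The syntactic transformation H^x for havoc:
H^x(∀⟨φ⟩. A) = ∀⟨φ⟩. ∀v. H^x(A)[v / φ^P(x)] and
H^x(∃⟨φ⟩. A) = ∃⟨φ⟩. ∃v. H^x(A)[v / φ^P(x)], acting homomorphically on all other
constructors (for closed assertions this coincides with the substitute-then-recurse
formulation, the fresh quantified value variable being the HOAS-bound v). -/
def HAssrt.havocT {PVar LVar Val : Type} [DecidableEq PVar] (x : PVar) :
    HAssrt PVar LVar Val → HAssrt PVar LVar Val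
  | .bconst b => .bconst b
  | .comp r e1 e2 => .comp r e1 e2
  | .conj A B => .conj (HAssrt.havocT x A) (HAssrt.havocT x B)
  | .disj A B => .disj (HAssrt.havocT x A) (HAssrt.havocT x B)
  | .forallV body => .forallV (fun v => HAssrt.havocT x (body v))
  | .existsV body => .existsV (fun v => HAssrt.havocT x (body v))
  | .forallS n A => .forallS n (.forallV (fun v => HAssrt.substPC n x v (HAssrt.havocT x A)))
  | .existsS n A => .existsS n (.existsV (fun v => HAssrt.substPC n x v (HAssrt.havocT x A)))

/-!
Replacing the lookup `φ^P(x)` by a value `v` has the same effect as updating `x` to `v` in the state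
bound to `φ`. Since `sem (havoc x) S` consists exactly of the states of `S` updated at `x`,
quantifying over it amounts to quantifying over a state of `S` and then over a value. Hence `H^x(A)`
is the exact precondition of `A` under `havoc x`: the implication from `H^x(A)` is half of an
equivalence, which holds in every environment and is proved by structural induction.
-/

section

variable {PVar LVar Val : Type} [DecidableEq PVar]

/-- The extended state `φ` with its program variable `x` set to `v`. This is the effect on a single
state both of one execution of `havoc x` and of the substitution `[v / φ^P(x)]`. -/
def EState.setP (x : PVar) (φ : EState PVar Val LVar Val) (v : Val) : EState PVar Val LVar Val :=
  (φ.1, Function.update φ.2 x v)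

theorem bigStep_havoc_iff {x : PVar} {σ σ' : PVar → Val} :
    BigStep (Cmd.havoc x) σ σ' ↔ ∃ v, Function.update σ x v = σ' := by
  constructor
  · rintro ⟨⟩
    exact ⟨_, rfl⟩
  · rintro ⟨v, rfl⟩
    exact .havoc x σ v

theorem sem_havoc_s14 (x : PVar) (S : Set (EState PVar Val LVar Val)) :
    sem (Cmd.havoc x) S = Set.image2 (EState.setP x) S Set.univ := by
  ext ⟨l, σ'⟩
  simp [sem, bigStep_havoc_iff, EState.setP]

theorem HExp.eval_substPC (n : ℕ) (x : PVar) (v : Val) (env : ℕ → EState PVar Val LVar Val)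
    (e : HExp PVar LVar Val) :
    (e.substPC n x v).eval env = e.eval (Function.update env n ((env n).setP x v)) := by
  induction e with
  | const c => rfl
  | pvar m y =>
    by_cases hm : m = n <;> by_cases hy : y = x <;>
      simp [HExp.substPC, HExp.eval, EState.setP, hm, hy]
  | lvar m y =>
    by_cases hm : m = n <;> simp [HExp.substPC, HExp.eval, EState.setP, hm]
  | binop op e₁ e₂ ih₁ ih₂ => simp only [HExp.substPC, HExp.eval, ih₁, ih₂]
  | fn f e ih => simp only [HExp.substPC, HExp.eval, ih]

namespace HAssrt

theorem sat_substPC (n : ℕ) (x : PVar) (v : Val) (S : Set (EState PVar Val LVar Val))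
    (env : ℕ → EState PVar Val LVar Val) (A : HAssrt PVar LVar Val) :
    (A.substPC n x v).sat S env ↔ A.sat S (Function.update env n ((env n).setP x v)) := by
  induction A generalizing env with
  | bconst b => rfl
  | comp r e₁ e₂ => simp only [substPC, sat, HExp.eval_substPC]
  | conj A B ihA ihB => simp only [substPC, sat, ihA, ihB]
  | disj A B ihA ihB => simp only [substPC, sat, ihA, ihB]
  | forallV body ih => simp only [substPC, sat, ih]
  | existsV body ih => simp only [substPC, sat, ih]
  | forallS m A ih | existsS m A ih =>
    obtain rfl | hm := eq_or_ne m n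
    · simp only [substPC, if_true, sat, Function.update_idem]
    · simp only [substPC, if_neg hm, sat, ih, Function.update_of_ne hm.symm,
        Function.update_comm hm]

theorem sat_update_substPC (n : ℕ) (x : PVar) (v : Val) (S : Set (EState PVar Val LVar Val))
    (env : ℕ → EState PVar Val LVar Val) (α : EState PVar Val LVar Val)
    (A : HAssrt PVar LVar Val) :
    (A.substPC n x v).sat S (Function.update env n α) ↔
      A.sat S (Function.update env n (α.setP x v)) := by
  rw [sat_substPC, Function.update_self, Function.update_idem]

theorem sat_havocT (x : PVar) (S : Set (EState PVar Val LVar Val))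
    (env : ℕ → EState PVar Val LVar Val) (A : HAssrt PVar LVar Val) :
    (A.havocT x).sat S env ↔ A.sat (sem (Cmd.havoc x) S) env := by
  induction A generalizing env with
  | bconst b => rfl
  | comp r e₁ e₂ => rfl
  | conj A B ihA ihB => simp only [havocT, sat, ihA, ihB]
  | disj A B ihA ihB => simp only [havocT, sat, ihA, ihB]
  | forallV body ih => simp only [havocT, sat, ih]
  | existsV body ih => simp only [havocT, sat, ih]
  | forallS n A ih =>
    calc ((forallS n A).havocT x).sat S env
        ↔ ∀ α ∈ S, ∀ v, A.sat (sem (Cmd.havoc x) S) (Function.update env n (α.setP x v)) := by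
          simp only [havocT, sat, sat_update_substPC, ih]
      _ ↔ (forallS n A).sat (sem (Cmd.havoc x) S) env := by
          simp only [sat, sem_havoc_s14, Set.forall_mem_image2, Set.mem_univ, true_imp_iff]
  | existsS n A ih =>
    calc ((existsS n A).havocT x).sat S env
        ↔ ∃ α ∈ S, ∃ v, A.sat (sem (Cmd.havoc x) S) (Function.update env n (α.setP x v)) := by
          simp only [havocT, sat, sat_update_substPC, ih]
      _ ↔ (existsS n A).sat (sem (Cmd.havoc x) S) env := by
          simp only [sat, sem_havoc_s14, Set.exists_mem_image2, Set.mem_univ, true_and]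

end HAssrt

theorem havocS_sound_general (x : PVar) (A : HAssrt PVar LVar Val)
    (env : ℕ → EState PVar Val LVar Val) :
    HyperTriple (fun S => (A.havocT x).sat S env) (Cmd.havoc x) (fun S => A.sat S env) :=
  fun S => (A.sat_havocT x S env).1

end

/-- Soundness of the syntactic havoc rule (HavocS): ⊨ {H^x(A)} (havoc x) {A} for
closed A. -/
theorem havocS_sound {PVar LVar Val : Type} [DecidableEq PVar]
    (x : PVar) (A : HAssrt PVar LVar Val) (hclosed : A.Closed) :
    ∀ env : ℕ → EState PVar Val LVar Val,
      HyperTriple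
        (fun S => HAssrt.sat S env (HAssrt.havocT x A))
        (Cmd.havoc x)
        (fun S => HAssrt.sat S env A) := by
  exact havocS_sound_general x A
end
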